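/- Let α and β be finite types, P a transition matrix over α × β with strictly positive stationary probability vector μ, and γ ∈ [0,1). Let r_A : α → ℝ and r_B : β → ℝ satisfy ‖r_A‖_∞ ≤ R_A and ‖r_B‖_∞ ≤ R_B. Suppose there exist a transition matrix M_A over α and a transition matrix M_B over β such that for every x : α → ℝ with ‖x‖_∞ ≤ 1, (1/2) ‖ P(x ⊗ e) − (M_A x) ⊗ e ‖_μ ≤ ε_A, and for every y : β → ℝ with ‖y‖_∞ ≤ 1, (1/2) ‖ P(e ⊗ y) − e ⊗ (M_B y) ‖_μ ≤ ε_B. Let P_A, P_B be the marginalized local transition matrices of P with respect to μ, let μ_A, μ_B be the marginals of μ on α and β, and set Q = (I − γP)^{-1}(r_A ⊗ e + e ⊗ r_B), Q_A = (I − γP_A)^{-1} r_A, Q_B = (I − γP_B)^{-1} r_B. Then: (i) for every x : α → ℝ with ‖x‖_∞ ≤ 1, ‖(P_A − M_A) x‖_{μ_A} ≤ 2ε_A, and symmetrically for B; and (ii) ‖Q − (Q_A ⊗ e + e ⊗ Q_B)‖_μ ≤ 4γ (ε_A R_A + ε_B R_B) / (1 − γ)². -/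

import Mathlib

open Matrix

/-- A transition matrix: nonnegative entries, each row sums to 1. -/
def IsTransition {ι : Type*} [Fintype ι] (P : Matrix ι ι ℝ) : Prop :=
  (∀ i j, 0 ≤ P i j) ∧ ∀ i, ∑ j, P i j = 1

/-- The marginalized local transition matrix of agent `A`. -/
noncomputable def localA {α β : Type*} [Fintype α] [Fintype β]
    (P : Matrix (α × β) (α × β) ℝ) (μ : α × β → ℝ) : Matrix α α ℝ :=
  Matrix.of fun a a' =>
    ∑ b, (μ (a, b) / ∑ b', μ (a, b')) * ∑ b', P (a, b) (a', b')

/-- The marginalized local transition matrix of agent `B`. -/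
noncomputable def localB {α β : Type*} [Fintype α] [Fintype β]
    (P : Matrix (α × β) (α × β) ℝ) (μ : α × β → ℝ) : Matrix β β ℝ :=
  Matrix.of fun b b' =>
    ∑ a, (μ (a, b) / ∑ a', μ (a', b)) * ∑ a', P (a, b) (a', b')

/-! Values are linear in the reward, so each agent can be treated separately. Write `x ∘ f` for the
lift of a local vector `x` along the projection `f` to that agent. The global value of `r ∘ f` minus
the lifted local value `v` of `r` solves the Bellman equation of `P` with right-hand side
`γ (P (v ∘ f) - (L v) ∘ f)`, where `L` is the local transition matrix. Since `μ` is stationary, `P`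
contracts `‖·‖_μ`, so the `‖·‖_μ` of the difference is at most `1 / (1 - γ)` times that of the
right-hand side, while `‖v‖_∞ ≤ ‖r‖_∞ / (1 - γ)`.
For the marginalized matrix, `L x` is the conditional expectation of `P (x ∘ f)` given `f`;
conditional expectation contracts `L¹`, so `L x` approximates `P (x ∘ f)` at most twice as badly as
any other function of `f` does. -/

section Seminorm

lemma one_sub_mul_le_map_sub_smul {E : Type*} [AddCommGroup E] [Module ℝ E] (p : Seminorm ℝ E)
    {v w : E} (h : p w ≤ p v) {γ : ℝ} (hγ : 0 ≤ γ) : (1 - γ) * p v ≤ p (v - γ • w) := by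
  have htriangle : p v ≤ p (v - γ • w) + γ * p w := by
    simpa only [sub_add_cancel, map_smul_eq_mul, Real.norm_of_nonneg hγ] using
      map_add_le_add p (v - γ • w) (γ • w)
  linarith [mul_le_mul_of_nonneg_left h hγ]

lemma seminorm_le_mul_norm_of_le_on_unitBall {E : Type*} [NormedAddCommGroup E] [NormedSpace ℝ E]
    (p : Seminorm ℝ E) {C : ℝ} (h : ∀ x, ‖x‖ ≤ 1 → p x ≤ C) (x : E) : p x ≤ C * ‖x‖ := by
  rcases eq_or_ne x 0 with rfl | hx
  · simp only [map_zero, norm_zero, mul_zero, le_refl]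
  · have hunit : ‖x‖⁻¹ * p x ≤ C := by
      simpa only [map_smul_eq_mul, norm_inv, norm_norm] using
        h (‖x‖⁻¹ • x) (norm_smul_inv_norm (𝕜 := ℝ) hx).le
    rwa [inv_mul_le_iff₀' (norm_pos_iff.mpr hx)] at hunit

end Seminorm

section Transition

variable {ι : Type*} [Fintype ι] {P : Matrix ι ι ℝ}

lemma abs_mulVec_le_mulVec_abs (hP : ∀ i j, 0 ≤ P i j) (v : ι → ℝ) : |P *ᵥ v| ≤ P *ᵥ |v| :=
  fun i => (Finset.abs_sum_le_sum_abs _ _).trans_eq <| Finset.sum_congr rfl fun j _ => by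
    rw [abs_mul, abs_of_nonneg (hP i j), Pi.abs_apply]

lemma IsTransition.mulVec_one (hP : IsTransition P) : P *ᵥ 1 = 1 :=
  funext fun i => (dotProduct_one _).trans (hP.2 i)

lemma IsTransition.norm_mulVec_le (hP : IsTransition P) (v : ι → ℝ) : ‖P *ᵥ v‖ ≤ ‖v‖ := by
  refine (pi_norm_le_iff_of_nonneg (norm_nonneg v)).mpr fun i => ?_
  calc |(P *ᵥ v) i| ≤ ∑ j, P i j * |v j| := abs_mulVec_le_mulVec_abs hP.1 v i
    _ ≤ ∑ j, P i j * ‖v‖ := Finset.sum_le_sum fun j _ =>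
        mul_le_mul_of_nonneg_left (norm_le_pi_norm v j) (hP.1 i j)
    _ = ‖v‖ := by rw [← Finset.sum_mul, hP.2, one_mul]

/-- The seminorm `‖v‖_μ = ∑ i, μ i * |v i|` of a nonnegative weight `μ`. It is bundled as a
`Seminorm` so that the general theory of seminorms applies. -/
def weightedL1 (μ : ι → ℝ) (hμ : 0 ≤ μ) : Seminorm ℝ (ι → ℝ) :=
  Seminorm.of (fun v => ∑ i, μ i * |v i|)
    (fun u v => by
      rw [← Finset.sum_add_distrib]
      exact Finset.sum_le_sum fun i _ =>
        (mul_le_mul_of_nonneg_left (abs_add_le _ _) (hμ i)).trans_eq (mul_add _ _ _))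
    (fun c v => by
      simp only [Pi.smul_apply, smul_eq_mul, abs_mul, mul_left_comm, Finset.mul_sum,
        Real.norm_eq_abs])

lemma weightedL1_eq_dotProduct_abs (μ : ι → ℝ) (hμ : 0 ≤ μ) (v : ι → ℝ) :
    weightedL1 μ hμ v = μ ⬝ᵥ |v| :=
  rfl

lemma weightedL1_mulVec_le (hP : ∀ i j, 0 ≤ P i j) {μ : ι → ℝ} (hμ : 0 ≤ μ)
    (hstat : μ ᵥ* P = μ) (v : ι → ℝ) : weightedL1 μ hμ (P *ᵥ v) ≤ weightedL1 μ hμ v := by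
  simp only [weightedL1_eq_dotProduct_abs]
  calc μ ⬝ᵥ |P *ᵥ v| ≤ μ ⬝ᵥ P *ᵥ |v| :=
        dotProduct_le_dotProduct_of_nonneg_left (abs_mulVec_le_mulVec_abs hP v) hμ
    _ = μ ⬝ᵥ |v| := by rw [dotProduct_mulVec, hstat]

end Transition

section DiscountedValue

variable {ι : Type*} [Fintype ι] [DecidableEq ι] {P : Matrix ι ι ℝ} {γ : ℝ}

/-- The discounted value `(1 - γ P)⁻¹ r` of a reward `r` under `P`. Matrix inversion returns `0` on
singular matrices, but `1 - γ P` is invertible when `P` is a transition matrix and `0 ≤ γ < 1`. -/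
noncomputable def discountedValue (P : Matrix ι ι ℝ) (γ : ℝ) (r : ι → ℝ) : ι → ℝ :=
  (1 - γ • P)⁻¹ *ᵥ r

lemma discountedValue_add (P : Matrix ι ι ℝ) (γ : ℝ) (r s : ι → ℝ) :
    discountedValue P γ (r + s) = discountedValue P γ r + discountedValue P γ s :=
  mulVec_add _ _ _

lemma one_sub_smul_mulVec (P : Matrix ι ι ℝ) (γ : ℝ) (v : ι → ℝ) :
    (1 - γ • P) *ᵥ v = v - γ • P *ᵥ v := by
  rw [sub_mulVec, one_mulVec, smul_mulVec]

lemma IsTransition.one_sub_mul_norm_le (hP : IsTransition P) (hγ0 : 0 ≤ γ) (v : ι → ℝ) :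
    (1 - γ) * ‖v‖ ≤ ‖(1 - γ • P) *ᵥ v‖ := by
  rw [one_sub_smul_mulVec]
  exact one_sub_mul_le_map_sub_smul (normSeminorm ℝ (ι → ℝ)) (hP.norm_mulVec_le v) hγ0

lemma IsTransition.isUnit_one_sub_smul (hP : IsTransition P) (hγ0 : 0 ≤ γ) (hγ1 : γ < 1) :
    IsUnit (1 - γ • P) := by
  rw [← mulVec_injective_iff_isUnit]
  refine (injective_iff_map_eq_zero (1 - γ • P).mulVecLin).mpr fun v hv => ?_
  have hle : (1 - γ) * ‖v‖ ≤ 0 := by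
    simpa only [show (1 - γ • P) *ᵥ v = 0 from hv, norm_zero] using hP.one_sub_mul_norm_le hγ0 v
  exact norm_le_zero_iff.mp (nonpos_of_mul_nonpos_right hle (sub_pos.mpr hγ1))

lemma IsTransition.one_sub_smul_mulVec_discountedValue (hP : IsTransition P) (hγ0 : 0 ≤ γ)
    (hγ1 : γ < 1) (r : ι → ℝ) : (1 - γ • P) *ᵥ discountedValue P γ r = r := by
  have hdet := (isUnit_iff_isUnit_det _).mp (hP.isUnit_one_sub_smul hγ0 hγ1)
  rw [discountedValue, mulVec_mulVec, mul_nonsing_inv _ hdet, one_mulVec]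

lemma IsTransition.discountedValue_sub_smul_mulVec (hP : IsTransition P) (hγ0 : 0 ≤ γ)
    (hγ1 : γ < 1) (r : ι → ℝ) :
    discountedValue P γ r - γ • P *ᵥ discountedValue P γ r = r := by
  rw [← one_sub_smul_mulVec, hP.one_sub_smul_mulVec_discountedValue hγ0 hγ1]

lemma IsTransition.norm_discountedValue_le (hP : IsTransition P) (hγ0 : 0 ≤ γ) (hγ1 : γ < 1)
    (r : ι → ℝ) : ‖discountedValue P γ r‖ ≤ ‖r‖ / (1 - γ) := by
  rw [le_div_iff₀' (sub_pos.mpr hγ1)]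
  simpa only [hP.one_sub_smul_mulVec_discountedValue hγ0 hγ1] using
    hP.one_sub_mul_norm_le hγ0 (discountedValue P γ r)

end DiscountedValue

section Intertwining

variable {Ω ι : Type*} [Fintype Ω] [Fintype ι]

/-- The failure `x ↦ P (x ∘ f) - (L x) ∘ f` of lifting along `f` to intertwine `L` with `P`. It is
bundled as a linear map so that seminorms can be pulled back along it. -/
def intertwiningDefect (P : Matrix Ω Ω ℝ) (L : Matrix ι ι ℝ) (f : Ω → ι) :
    (ι → ℝ) →ₗ[ℝ] (Ω → ℝ) :=
  P.mulVecLin ∘ₗ LinearMap.funLeft ℝ ℝ f - LinearMap.funLeft ℝ ℝ f ∘ₗ L.mulVecLin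

lemma intertwiningDefect_apply (P : Matrix Ω Ω ℝ) (L : Matrix ι ι ℝ) (f : Ω → ι) (x : ι → ℝ) :
    intertwiningDefect P L f x = P *ᵥ (x ∘ f) - (L *ᵥ x) ∘ f :=
  rfl

variable [DecidableEq Ω] [DecidableEq ι] {P : Matrix Ω Ω ℝ} {L : Matrix ι ι ℝ} {γ : ℝ}

lemma discountedValue_comp_sub_residual_eq (hP : IsTransition P) (hL : IsTransition L) (f : Ω → ι)
    (hγ0 : 0 ≤ γ) (hγ1 : γ < 1) (r : ι → ℝ) :
    let d := discountedValue P γ (r ∘ f) - discountedValue L γ r ∘ f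
    d - γ • P *ᵥ d = γ • intertwiningDefect P L f (discountedValue L γ r) := by
  intro d
  have hglobal := hP.discountedValue_sub_smul_mulVec hγ0 hγ1 (r ∘ f)
  have hlocal := congrArg (· ∘ f) (hL.discountedValue_sub_smul_mulVec hγ0 hγ1 r)
  ext p
  have hglobal_p := congrFun hglobal p
  have hlocal_p := congrFun hlocal p
  simp only [d, intertwiningDefect_apply, mulVec_sub, Pi.sub_apply, Pi.smul_apply, smul_eq_mul,
    Function.comp_apply] at hglobal_p hlocal_p ⊢
  linarith

lemma weightedL1_discountedValue_comp_sub_le (hP : IsTransition P) (hL : IsTransition L)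
    {μ : Ω → ℝ} (hμ : 0 ≤ μ) (hstat : μ ᵥ* P = μ) {f : Ω → ι} (hγ0 : 0 ≤ γ) (hγ1 : γ < 1) {δ : ℝ}
    (hδ : ∀ x, ‖x‖ ≤ 1 → weightedL1 μ hμ (intertwiningDefect P L f x) ≤ δ)
    {r : ι → ℝ} {R : ℝ} (hr : ‖r‖ ≤ R) :
    weightedL1 μ hμ (discountedValue P γ (r ∘ f) - discountedValue L γ r ∘ f)
      ≤ γ * δ * R / (1 - γ) ^ 2 := by
  set v := discountedValue L γ r
  set d := discountedValue P γ (r ∘ f) - v ∘ f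
  have hγ : 0 < 1 - γ := sub_pos.mpr hγ1
  have hδ0 : 0 ≤ δ := (apply_nonneg _ _).trans (hδ 0 (norm_zero.trans_le zero_le_one))
  have hv : ‖v‖ ≤ R / (1 - γ) :=
    (hL.norm_discountedValue_le hγ0 hγ1 r).trans (div_le_div_of_nonneg_right hr hγ.le)
  have hdefect : weightedL1 μ hμ (intertwiningDefect P L f v) ≤ δ * (R / (1 - γ)) :=
    (seminorm_le_mul_norm_of_le_on_unitBall ((weightedL1 μ hμ).comp (intertwiningDefect P L f))
      hδ v).trans (mul_le_mul_of_nonneg_left hv hδ0)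
  have hresidual : (1 - γ) * weightedL1 μ hμ d ≤ γ * (δ * (R / (1 - γ))) :=
    calc (1 - γ) * weightedL1 μ hμ d ≤ weightedL1 μ hμ (d - γ • P *ᵥ d) :=
          one_sub_mul_le_map_sub_smul _ (weightedL1_mulVec_le hP.1 hμ hstat d) hγ0
      _ = γ * weightedL1 μ hμ (intertwiningDefect P L f v) := by
          rw [discountedValue_comp_sub_residual_eq hP hL f hγ0 hγ1, map_smul_eq_mul,
            Real.norm_of_nonneg hγ0]
      _ ≤ γ * (δ * (R / (1 - γ))) := mul_le_mul_of_nonneg_left hdefect hγ0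
  calc weightedL1 μ hμ d ≤ γ * (δ * (R / (1 - γ))) / (1 - γ) := (le_div_iff₀' hγ).mpr hresidual
    _ = γ * δ * R / (1 - γ) ^ 2 := by field_simp

end Intertwining

section Lumping

variable {Ω ι : Type*} [Fintype Ω] [DecidableEq ι]

/-- The pushforward of a weight `g` along `f`; for a projection of a product it is the marginal. -/
def marginal (f : Ω → ι) (g : Ω → ℝ) (i : ι) : ℝ :=
  ∑ p with f p = i, g p

lemma marginal_nonneg (f : Ω → ι) {g : Ω → ℝ} (hg : 0 ≤ g) : 0 ≤ marginal f g :=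
  fun _ => Finset.sum_nonneg fun p _ => hg p

lemma abs_marginal_le (f : Ω → ι) (g : Ω → ℝ) : |marginal f g| ≤ marginal f |g| :=
  fun _ => Finset.abs_sum_le_sum_abs _ _

lemma marginal_mul_comp (f : Ω → ι) (g : Ω → ℝ) (y : ι → ℝ) :
    marginal f (g * y ∘ f) = marginal f g * y := by
  ext i
  simp only [marginal, Pi.mul_apply, Finset.sum_mul]
  exact Finset.sum_congr rfl fun p hp => by rw [Function.comp_apply, (Finset.mem_filter.mp hp).2]

/-- The one-step transition matrix between the values of `f` along a chain with transition matrix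
`P` started from the weight `μ`, simultaneously generalizing `localA` and `localB`. A row is zero
where `marginal f μ` vanishes. -/
noncomputable def lumped (P : Matrix Ω Ω ℝ) (μ : Ω → ℝ) (f : Ω → ι) : Matrix ι ι ℝ :=
  Matrix.of fun i j => marginal f (fun p => μ p * marginal f (P p) j) i / marginal f μ i

variable [Fintype ι]

lemma marginal_dotProduct (f : Ω → ι) (g : Ω → ℝ) (x : ι → ℝ) :
    marginal f g ⬝ᵥ x = g ⬝ᵥ (x ∘ f) :=
  calc ∑ i, marginal f g i * x i = ∑ i, marginal f (g * x ∘ f) i := by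
        rw [marginal_mul_comp]; rfl
    _ = ∑ p, g p * x (f p) := Finset.sum_fiberwise _ _ _

variable {P : Matrix Ω Ω ℝ} {μ : Ω → ℝ} {f : Ω → ι}

lemma marginal_mul_lumped_mulVec (hμf : ∀ i, marginal f μ i ≠ 0) (x : ι → ℝ) :
    marginal f μ * (lumped P μ f *ᵥ x) = marginal f (μ * P *ᵥ (x ∘ f)) := by
  ext i
  calc marginal f μ i * ∑ j, lumped P μ f i j * x j
      = ∑ j, marginal f (fun p => μ p * marginal f (P p) j) i * x j := by
        simp only [Finset.mul_sum, ← mul_assoc, lumped, of_apply, mul_div_cancel₀ _ (hμf i)]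
    _ = ∑ p with f p = i, μ p * (marginal f (P p) ⬝ᵥ x) := by
        simp only [marginal, dotProduct, Finset.sum_mul, Finset.mul_sum, mul_assoc]
        exact Finset.sum_comm
    _ = marginal f (μ * P *ᵥ (x ∘ f)) i :=
        Finset.sum_congr rfl fun p _ => by rw [marginal_dotProduct]; rfl

lemma isTransition_lumped (hP : IsTransition P) (hμ : 0 ≤ μ) (hμf : ∀ i, marginal f μ i ≠ 0) :
    IsTransition (lumped P μ f) := by
  refine ⟨fun i j => ?_, fun i => ?_⟩
  · exact div_nonneg (marginal_nonneg f (fun p => mul_nonneg (hμ p)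
      (marginal_nonneg f (hP.1 p) j)) i) (marginal_nonneg f hμ i)
  · have hone : marginal f μ * (lumped P μ f *ᵥ 1) = marginal f μ := by
      rw [marginal_mul_lumped_mulVec hμf, Pi.one_comp, hP.mulVec_one, mul_one]
    rw [← dotProduct_one]
    exact mul_eq_left₀ (hμf i) |>.mp (congrFun hone i)

lemma weightedL1_marginal (hμ : 0 ≤ μ) (f : Ω → ι) (x : ι → ℝ) :
    weightedL1 (marginal f μ) (marginal_nonneg f hμ) x = weightedL1 μ hμ (x ∘ f) :=
  marginal_dotProduct f μ |x|

lemma weightedL1_lumped_mulVec_sub_le (P : Matrix Ω Ω ℝ) (hμ : 0 ≤ μ)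
    (hμf : ∀ i, marginal f μ i ≠ 0) (x y : ι → ℝ) :
    weightedL1 (marginal f μ) (marginal_nonneg f hμ) (lumped P μ f *ᵥ x - y)
      ≤ weightedL1 μ hμ (P *ᵥ (x ∘ f) - y ∘ f) := by
  set g := P *ᵥ (x ∘ f) - y ∘ f
  have hconditional : marginal f μ * (lumped P μ f *ᵥ x - y) = marginal f (μ * g) := by
    rw [mul_sub, marginal_mul_lumped_mulVec hμf, ← marginal_mul_comp]
    ext i
    simp only [Pi.sub_apply, marginal, ← Finset.sum_sub_distrib, g, mul_sub]
  calc ∑ i, marginal f μ i * |(lumped P μ f *ᵥ x - y) i|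
      = ∑ i, |marginal f (μ * g) i| := Finset.sum_congr rfl fun i _ => by
        rw [← hconditional, Pi.mul_apply, abs_mul, abs_of_nonneg (marginal_nonneg f hμ i)]
    _ ≤ ∑ i, marginal f |μ * g| i := Finset.sum_le_sum fun i _ => abs_marginal_le f _ i
    _ = ∑ p, |μ p * g p| := Finset.sum_fiberwise _ _ _
    _ = ∑ p, μ p * |g p| := by simp only [abs_mul, abs_of_nonneg (hμ _)]

lemma weightedL1_intertwiningDefect_lumped_le (P : Matrix Ω Ω ℝ) (hμ : 0 ≤ μ)
    (hμf : ∀ i, marginal f μ i ≠ 0) (x y : ι → ℝ) :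
    weightedL1 μ hμ (intertwiningDefect P (lumped P μ f) f x)
      ≤ 2 * weightedL1 μ hμ (P *ᵥ (x ∘ f) - y ∘ f) := by
  have htriangle := le_map_sub_add_map_sub (weightedL1 μ hμ) (P *ᵥ (x ∘ f)) (y ∘ f)
    ((lumped P μ f *ᵥ x) ∘ f)
  have hlumped := weightedL1_lumped_mulVec_sub_le P hμ hμf x y
  rw [weightedL1_marginal hμ, Pi.sub_comp, map_sub_rev] at hlumped
  rw [intertwiningDefect_apply]
  linarith

lemma weightedL1_discountedValue_lumped_comp_sub_le [DecidableEq Ω] (hP : IsTransition P)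
    (hμ : 0 ≤ μ) (hstat : μ ᵥ* P = μ) (hμf : ∀ i, marginal f μ i ≠ 0) {γ : ℝ} (hγ0 : 0 ≤ γ)
    (hγ1 : γ < 1) {δ : ℝ} {T : (ι → ℝ) → ι → ℝ}
    (hT : ∀ x, ‖x‖ ≤ 1 → weightedL1 μ hμ (P *ᵥ (x ∘ f) - T x ∘ f) ≤ δ)
    {r : ι → ℝ} {R : ℝ} (hr : ‖r‖ ≤ R) :
    weightedL1 μ hμ (discountedValue P γ (r ∘ f) - discountedValue (lumped P μ f) γ r ∘ f)
      ≤ 2 * γ * δ * R / (1 - γ) ^ 2 := by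
  refine (weightedL1_discountedValue_comp_sub_le hP (isTransition_lumped hP hμ hμf) hμ hstat
    hγ0 hγ1 (fun x hx => ?_) hr).trans_eq (by ring : γ * (2 * δ) * R / (1 - γ) ^ 2 = _)
  exact (weightedL1_intertwiningDefect_lumped_le P hμ hμf x (T x)).trans
    (mul_le_mul_of_nonneg_left (hT x hx) zero_le_two)

end Lumping

section Product

variable {α β : Type*} [Fintype α] [Fintype β]

lemma marginal_fst [DecidableEq α] (g : α × β → ℝ) (a : α) :
    marginal Prod.fst g a = ∑ b, g (a, b) := by
  simp [marginal, Finset.sum_filter, Fintype.sum_prod_type_right]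

lemma marginal_snd [DecidableEq β] (g : α × β → ℝ) (b : β) :
    marginal Prod.snd g b = ∑ a, g (a, b) := by
  simp [marginal, Finset.sum_filter, Fintype.sum_prod_type]

lemma localA_eq_lumped [DecidableEq α] (P : Matrix (α × β) (α × β) ℝ) (μ : α × β → ℝ) :
    localA P μ = lumped P μ Prod.fst := by
  ext a a'
  simp only [localA, lumped, of_apply, marginal_fst, Finset.sum_div, div_mul_eq_mul_div]

lemma localB_eq_lumped [DecidableEq β] (P : Matrix (α × β) (α × β) ℝ) (μ : α × β → ℝ) :
    localB P μ = lumped P μ Prod.snd := by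
  ext b b'
  simp only [localB, lumped, of_apply, marginal_snd, Finset.sum_div, div_mul_eq_mul_div]

end Product

theorem stmt12_general {α β : Type*} [Fintype α] [Fintype β] [DecidableEq α] [DecidableEq β]
    [Nonempty (α × β)] (P : Matrix (α × β) (α × β) ℝ) (hP : IsTransition P)
    (μ : α × β → ℝ) (hμ : ∀ p, 0 ≤ μ p) (hμA : ∀ a, 0 < ∑ b, μ (a, b))
    (hμB : ∀ b, 0 < ∑ a, μ (a, b)) (hstat : ∀ q, ∑ p, μ p * P p q = μ q)
    (γ RA RB εA εB : ℝ) (hγ0 : 0 ≤ γ) (hγ1 : γ < 1)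
    (rA : α → ℝ) (rB : β → ℝ) (hrA : ∀ a, |rA a| ≤ RA) (hrB : ∀ b, |rB b| ≤ RB)
    (TA : (α → ℝ) → α → ℝ) (TB : (β → ℝ) → β → ℝ)
    (hTA : ∀ x : α → ℝ, (∀ a, |x a| ≤ 1) →
      (1 / 2 : ℝ) * ∑ p, μ p * |(P *ᵥ fun q => x q.1) p - TA x p.1| ≤ εA)
    (hTB : ∀ y : β → ℝ, (∀ b, |y b| ≤ 1) →
      (1 / 2 : ℝ) * ∑ p, μ p * |(P *ᵥ fun q => y q.2) p - TB y p.2| ≤ εB) :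
    (∀ x : α → ℝ, (∀ a, |x a| ≤ 1) →
      ∑ a, (∑ b, μ (a, b)) * |(localA P μ *ᵥ x) a - TA x a| ≤ 2 * εA) ∧
    (∀ y : β → ℝ, (∀ b, |y b| ≤ 1) →
      ∑ b, (∑ a, μ (a, b)) * |(localB P μ *ᵥ y) b - TB y b| ≤ 2 * εB) ∧
    ∑ p, μ p * |((1 - γ • P)⁻¹ *ᵥ fun q => rA q.1 + rB q.2) p
            - (((1 - γ • localA P μ)⁻¹ *ᵥ rA) p.1 + ((1 - γ • localB P μ)⁻¹ *ᵥ rB) p.2)|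
        ≤ 4 * γ * (εA * RA + εB * RB) / (1 - γ) ^ 2 := by
  simp only [localA_eq_lumped, localB_eq_lumped]
  simp only [← marginal_fst] at hμA ⊢
  simp only [← marginal_snd] at hμB ⊢
  have hA (x : α → ℝ) (hx : ∀ a, |x a| ≤ 1) :
      weightedL1 μ hμ (P *ᵥ (x ∘ Prod.fst) - TA x ∘ Prod.fst) ≤ 2 * εA :=
    (inv_mul_le_iff₀ zero_lt_two).mp (one_div (2 : ℝ) ▸ hTA x hx)
  have hB (y : β → ℝ) (hy : ∀ b, |y b| ≤ 1) :
      weightedL1 μ hμ (P *ᵥ (y ∘ Prod.snd) - TB y ∘ Prod.snd) ≤ 2 * εB :=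
    (inv_mul_le_iff₀ zero_lt_two).mp (one_div (2 : ℝ) ▸ hTB y hy)
  have hμA_ne a := (hμA a).ne'
  have hμB_ne b := (hμB b).ne'
  refine ⟨fun x hx => (weightedL1_lumped_mulVec_sub_le P hμ hμA_ne x _).trans (hA x hx),
    fun y hy => (weightedL1_lumped_mulVec_sub_le P hμ hμB_ne y _).trans (hB y hy), ?_⟩
  obtain ⟨_, _⟩ := nonempty_prod.mp ‹Nonempty (α × β)›
  have herrA := weightedL1_discountedValue_lumped_comp_sub_le hP hμ (funext hstat) hμA_ne hγ0 hγ1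
    (fun x hx => hA x ((pi_norm_le_iff_of_nonneg zero_le_one).mp hx))
    ((pi_norm_le_iff_of_nonempty rA).mpr hrA)
  have herrB := weightedL1_discountedValue_lumped_comp_sub_le hP hμ (funext hstat) hμB_ne hγ0 hγ1
    (fun y hy => hB y ((pi_norm_le_iff_of_nonneg zero_le_one).mp hy))
    ((pi_norm_le_iff_of_nonempty rB).mpr hrB)
  calc weightedL1 μ hμ (discountedValue P γ (rA ∘ Prod.fst + rB ∘ Prod.snd)
        - (discountedValue (lumped P μ Prod.fst) γ rA ∘ Prod.fst
          + discountedValue (lumped P μ Prod.snd) γ rB ∘ Prod.snd))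
      ≤ 2 * γ * (2 * εA) * RA / (1 - γ) ^ 2 + 2 * γ * (2 * εB) * RB / (1 - γ) ^ 2 := by
        rw [discountedValue_add, add_sub_add_comm]
        exact (map_add_le_add _ _ _).trans (add_le_add herrA herrB)
    _ = 4 * γ * (εA * RA + εB * RB) / (1 - γ) ^ 2 := by ring

/-- Decomposition error in `μ`-norm bounded by the measure of Markov entanglement w.r.t.
the `μ`-weighted agent-wise total variation distance. -/
theorem stmt12 {α β : Type*} [Fintype α] [Fintype β] [DecidableEq α] [DecidableEq β]
    (P : Matrix (α × β) (α × β) ℝ) (hP : IsTransition P)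
    (μ : α × β → ℝ) (hμpos : ∀ p, 0 < μ p) (hμsum : ∑ p, μ p = 1)
    (hstat : ∀ q, ∑ p, μ p * P p q = μ q)
    (γ RA RB εA εB : ℝ) (hγ0 : 0 ≤ γ) (hγ1 : γ < 1)
    (rA : α → ℝ) (rB : β → ℝ) (hrA : ∀ a, |rA a| ≤ RA) (hrB : ∀ b, |rB b| ≤ RB)
    (MA : Matrix α α ℝ) (hMA : IsTransition MA)
    (MB : Matrix β β ℝ) (hMB : IsTransition MB)
    (hATVA : ∀ x : α → ℝ, (∀ a, |x a| ≤ 1) →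
      (1 / 2 : ℝ) * ∑ p, μ p * |P.mulVec (fun q => x q.1) p - (MA.mulVec x) p.1| ≤ εA)
    (hATVB : ∀ y : β → ℝ, (∀ b, |y b| ≤ 1) →
      (1 / 2 : ℝ) * ∑ p, μ p * |P.mulVec (fun q => y q.2) p - (MB.mulVec y) p.2| ≤ εB) :
    (∀ x : α → ℝ, (∀ a, |x a| ≤ 1) →
      ∑ a, (∑ b, μ (a, b)) * |(localA P μ).mulVec x a - MA.mulVec x a| ≤ 2 * εA) ∧
    (∀ y : β → ℝ, (∀ b, |y b| ≤ 1) →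
      ∑ b, (∑ a, μ (a, b)) * |(localB P μ).mulVec y b - MB.mulVec y b| ≤ 2 * εB) ∧
    ∑ p, μ p * |((1 - γ • P)⁻¹).mulVec (fun q => rA q.1 + rB q.2) p
            - ((((1 - γ • localA P μ)⁻¹).mulVec rA) p.1
              + (((1 - γ • localB P μ)⁻¹).mulVec rB) p.2)|
        ≤ 4 * γ * (εA * RA + εB * RB) / (1 - γ) ^ 2 := by
  obtain ⟨_, _⟩ := nonempty_prod.mp (Finset.univ_nonempty_iff.mp
    (Finset.nonempty_of_sum_ne_zero (hμsum.trans_ne one_ne_zero)))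
  exact stmt12_general P hP μ (fun p => (hμpos p).le)
    (fun a => Finset.sum_pos (fun b _ => hμpos (a, b)) Finset.univ_nonempty)
    (fun b => Finset.sum_pos (fun a _ => hμpos (a, b)) Finset.univ_nonempty)
    hstat γ RA RB εA εB hγ0 hγ1 rA rB hrA hrB (MA *ᵥ ·) (MB *ᵥ ·) hATVA hATVB
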